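/- Let u ∈ S^{d-1} and let a : ℝ → ℝ be such that ω ↦ a(ω·u) is σ-integrable on S^{d-1}. Then for all vectors v, w ∈ ℝ^d, ∫_{S^{d-1}} a(ω·u) (ω⊥·v)(ω⊥·w) dσ(ω) = (1/(d−1)) · (∫_{S^{d-1}} a(ω·u)(1 − (ω·u)²) dσ(ω)) · (v·w − (v·u)(w·u)). Equivalently, the matrix ∫ a(ω·u) ω⊥⊗ω⊥ dσ equals (1/(d−1)) ∫ a(ω·u)(1−(ω·u)²) dσ times the orthogonal projection P_{u⊥} = Id − u⊗u. -/

import Mathlib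

/-!
Since `⟪ω⊥, v⟫ = ⟪ω, v⊥⟫`, the left-hand side is the bilinear form
`(x, y) ↦ ∫ a(ω·u) ⟪ω, x⟫ ⟪ω, y⟫ dσ` evaluated at `v⊥`, `w⊥`. Its quadratic form `zonalQuad` is
invariant under the isometries fixing `u`, and the reflection exchanging two vectors of equal norm
in `u^⊥` is one of these, so on `u^⊥` it depends on the norm only (`zonalQuad_eq_of_norm_eq`).
Summing it over an orthonormal basis of `u^⊥` and using `∑ ⟪ω, bᵢ⟫² = 1 - ⟪ω, u⟫²` gives the
constant (`zonalQuad_eq`); polarization then recovers the bilinear form.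
-/

open MeasureTheory Metric
open scoped RealInnerProductSpace

/-- The map induced on the unit sphere by a linear isometry of `EuclideanSpace ℝ (Fin d)`. -/
noncomputable def sphereRot {d : ℕ}
    (e : EuclideanSpace ℝ (Fin d) ≃ₗᵢ[ℝ] EuclideanSpace ℝ (Fin d))
    (ω : sphere (0 : EuclideanSpace ℝ (Fin d)) 1) :
    sphere (0 : EuclideanSpace ℝ (Fin d)) 1 :=
  ⟨e ω, by
    have hω := ω.2
    simp only [mem_sphere_iff_norm, sub_zero] at hω ⊢
    rw [e.norm_map]
    exact hω⟩

/-- The quadratic form `x ↦ ∫ a(ω·u) ⟪ω, x⟫² dσ`. -/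
noncomputable def zonalQuad {d : ℕ} (σ : Measure (sphere (0 : EuclideanSpace ℝ (Fin d)) 1))
    (u : EuclideanSpace ℝ (Fin d)) (a : ℝ → ℝ) (x : EuclideanSpace ℝ (Fin d)) : ℝ :=
  ∫ ω, a ⟪(ω : EuclideanSpace ℝ (Fin d)), u⟫ * ⟪(ω : EuclideanSpace ℝ (Fin d)), x⟫ ^ 2 ∂σ

lemma continuous_sphereRot {d : ℕ}
    (e : EuclideanSpace ℝ (Fin d) ≃ₗᵢ[ℝ] EuclideanSpace ℝ (Fin d)) :
    Continuous (sphereRot e) :=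
  (e.continuous.comp continuous_subtype_val).subtype_mk _

/-- Multiplying an integrable function on the sphere by a continuous one keeps it integrable,
since the sphere is compact. -/
lemma integrable_mul_continuous {d : ℕ}
    {σ : Measure (sphere (0 : EuclideanSpace ℝ (Fin d)) 1)}
    {f g : sphere (0 : EuclideanSpace ℝ (Fin d)) 1 → ℝ} (hf : Integrable f σ)
    (hg : Continuous g) : Integrable (fun ω => f ω * g ω) σ := by
  obtain ⟨C, hC⟩ := isCompact_univ.exists_bound_of_continuousOn hg.continuousOn
  exact hf.mul_bdd hg.aestronglyMeasurable (Filter.Eventually.of_forall fun ω => hC ω trivial)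

section

variable {d : ℕ} {σ : Measure (sphere (0 : EuclideanSpace ℝ (Fin d)) 1)}
  {u : EuclideanSpace ℝ (Fin d)} {a : ℝ → ℝ}

lemma zonalQuad_smul (t : ℝ) (x : EuclideanSpace ℝ (Fin d)) :
    zonalQuad σ u a (t • x) = t ^ 2 * zonalQuad σ u a x := by
  unfold zonalQuad
  rw [← integral_const_mul]
  congr 1
  ext ω
  rw [inner_smul_right]
  ring

lemma zonalQuad_map
    (hσ : ∀ e : EuclideanSpace ℝ (Fin d) ≃ₗᵢ[ℝ] EuclideanSpace ℝ (Fin d),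
      σ.map (sphereRot e) = σ)
    (hint : Integrable (fun ω : sphere (0 : EuclideanSpace ℝ (Fin d)) 1 =>
      a ⟪(ω : EuclideanSpace ℝ (Fin d)), u⟫) σ)
    (e : EuclideanSpace ℝ (Fin d) ≃ₗᵢ[ℝ] EuclideanSpace ℝ (Fin d)) (he : e u = u)
    (x : EuclideanSpace ℝ (Fin d)) :
    zonalQuad σ u a (e x) = zonalQuad σ u a x := by
  have hi : Integrable (fun ω : sphere (0 : EuclideanSpace ℝ (Fin d)) 1 =>
      a ⟪(ω : EuclideanSpace ℝ (Fin d)), u⟫ * ⟪(ω : EuclideanSpace ℝ (Fin d)), e x⟫ ^ 2) σ :=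
    integrable_mul_continuous hint (by fun_prop)
  have h := integral_map (μ := σ) (continuous_sphereRot e).measurable.aemeasurable
    (f := fun ω : sphere (0 : EuclideanSpace ℝ (Fin d)) 1 =>
      a ⟪(ω : EuclideanSpace ℝ (Fin d)), u⟫ * ⟪(ω : EuclideanSpace ℝ (Fin d)), e x⟫ ^ 2)
    (by rw [hσ e]; exact hi.aestronglyMeasurable)
  rw [hσ e] at h
  unfold zonalQuad
  rw [h]
  congr 1
  ext ω
  have h1 : ⟪e ω, u⟫ = ⟪(ω : EuclideanSpace ℝ (Fin d)), u⟫ := by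
    conv_lhs => rw [← he]
    exact e.inner_map_map _ _
  simp only [sphereRot, h1, e.inner_map_map]

lemma zonalQuad_eq_of_norm_eq
    (hσ : ∀ e : EuclideanSpace ℝ (Fin d) ≃ₗᵢ[ℝ] EuclideanSpace ℝ (Fin d),
      σ.map (sphereRot e) = σ)
    (hint : Integrable (fun ω : sphere (0 : EuclideanSpace ℝ (Fin d)) 1 =>
      a ⟪(ω : EuclideanSpace ℝ (Fin d)), u⟫) σ)
    {x y : EuclideanSpace ℝ (Fin d)} (hx : ⟪x, u⟫ = 0) (hy : ⟪y, u⟫ = 0) (hxy : ‖x‖ = ‖y‖) :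
    zonalQuad σ u a x = zonalQuad σ u a y := by
  -- The reflection in the hyperplane orthogonal to `x - y` exchanges `x` and `y`.
  have he : (ℝ ∙ (x - y))ᗮ.reflection u = u := by
    apply Submodule.reflection_mem_subspace_eq_self
    rw [Submodule.mem_orthogonal_singleton_iff_inner_right, inner_sub_left, hx, hy, sub_zero]
  rw [← zonalQuad_map hσ hint _ he x, Submodule.reflection_sub hxy]

lemma zonalQuad_eq (hd : 2 ≤ d)
    (hσ : ∀ e : EuclideanSpace ℝ (Fin d) ≃ₗᵢ[ℝ] EuclideanSpace ℝ (Fin d),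
      σ.map (sphereRot e) = σ) (hu : ‖u‖ = 1)
    (hint : Integrable (fun ω : sphere (0 : EuclideanSpace ℝ (Fin d)) 1 =>
      a ⟪(ω : EuclideanSpace ℝ (Fin d)), u⟫) σ)
    {x : EuclideanSpace ℝ (Fin d)} (hx : ⟪x, u⟫ = 0) :
    zonalQuad σ u a x = (1 / ((d : ℝ) - 1)) *
      (∫ ω, a ⟪(ω : EuclideanSpace ℝ (Fin d)), u⟫ *
        (1 - ⟪(ω : EuclideanSpace ℝ (Fin d)), u⟫ ^ 2) ∂σ) * ‖x‖ ^ 2 := by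
  let i₀ : Fin d := ⟨0, by omega⟩
  have hv : Orthonormal ℝ (({i₀} : Set (Fin d)).domRestrict fun _ => u) :=
    ⟨fun _ => hu, fun i j hij => (hij (Subsingleton.elim i j)).elim⟩
  obtain ⟨b, hb⟩ := hv.exists_orthonormalBasis_extension_of_card_eq (by simp)
  have hb0 : b i₀ = u := hb i₀ rfl
  have hterm : ∀ i ∈ Finset.univ.erase i₀,
      ‖x‖ ^ 2 * zonalQuad σ u a (b i) = zonalQuad σ u a x := by
    intro i hi
    have hbi : ⟪b i, u⟫ = 0 := by
      rw [← hb0]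
      exact b.orthonormal.2 (Finset.ne_of_mem_erase hi)
    rw [← zonalQuad_smul]
    exact zonalQuad_eq_of_norm_eq hσ hint (by rw [inner_smul_left, hbi, mul_zero]) hx
      (by simp [norm_smul])
  have hsum : ∑ i ∈ Finset.univ.erase i₀, zonalQuad σ u a (b i) =
      ∫ ω, a ⟪(ω : EuclideanSpace ℝ (Fin d)), u⟫ *
        (1 - ⟪(ω : EuclideanSpace ℝ (Fin d)), u⟫ ^ 2) ∂σ := by
    unfold zonalQuad
    rw [← integral_finsetSum _ fun i _ => integrable_mul_continuous hint (by fun_prop)]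
    congr 1
    ext ω
    have hω : ‖(ω : EuclideanSpace ℝ (Fin d))‖ = 1 := norm_eq_of_mem_sphere ω
    have hp := b.sum_sq_inner_left (ω : EuclideanSpace ℝ (Fin d))
    rw [← Finset.add_sum_erase _ _ (Finset.mem_univ i₀), hb0, hω] at hp
    rw [← Finset.mul_sum]
    congr 1
    linarith
  have hcard : ((Finset.univ.erase i₀).card : ℝ) = (d : ℝ) - 1 := by
    rw [Finset.card_erase_of_mem (Finset.mem_univ _), Finset.card_univ, Fintype.card_fin,
      Nat.cast_sub (by omega), Nat.cast_one]
  have key := Finset.sum_congr rfl hterm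
  rw [← Finset.mul_sum, hsum, Finset.sum_const, nsmul_eq_mul, hcard] at key
  have hd' : (d : ℝ) - 1 ≠ 0 := by
    have : (2 : ℝ) ≤ d := by exact_mod_cast hd
    linarith
  field_simp
  linarith

end

/-- the second moment of `ω⊥`:
`∫ a(ω·u) (ω⊥·v)(ω⊥·w) dσ = (1/(d−1)) (∫ a(ω·u)(1−(ω·u)²) dσ) (v·w − (v·u)(w·u))`. -/
theorem stmt2 (d : ℕ) (hd : 2 ≤ d)
    (σ : Measure (sphere (0 : EuclideanSpace ℝ (Fin d)) 1))
    [IsProbabilityMeasure σ]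
    (hσ : ∀ e : EuclideanSpace ℝ (Fin d) ≃ₗᵢ[ℝ] EuclideanSpace ℝ (Fin d),
      σ.map (sphereRot e) = σ)
    (u : sphere (0 : EuclideanSpace ℝ (Fin d)) 1)
    (a : ℝ → ℝ)
    (hint : Integrable (fun ω : sphere (0 : EuclideanSpace ℝ (Fin d)) 1 =>
      a ⟪(ω : EuclideanSpace ℝ (Fin d)), (u : EuclideanSpace ℝ (Fin d))⟫) σ)
    (v w : EuclideanSpace ℝ (Fin d)) :
    ∫ ω, a ⟪(ω : EuclideanSpace ℝ (Fin d)), (u : EuclideanSpace ℝ (Fin d))⟫ *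
        ⟪(ω : EuclideanSpace ℝ (Fin d)) -
            ⟪(ω : EuclideanSpace ℝ (Fin d)), (u : EuclideanSpace ℝ (Fin d))⟫ •
              (u : EuclideanSpace ℝ (Fin d)), v⟫ *
        ⟪(ω : EuclideanSpace ℝ (Fin d)) -
            ⟪(ω : EuclideanSpace ℝ (Fin d)), (u : EuclideanSpace ℝ (Fin d))⟫ •
              (u : EuclideanSpace ℝ (Fin d)), w⟫ ∂σ
      = (1 / ((d : ℝ) - 1)) *
          (∫ ω, a ⟪(ω : EuclideanSpace ℝ (Fin d)), (u : EuclideanSpace ℝ (Fin d))⟫ *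
            (1 - ⟪(ω : EuclideanSpace ℝ (Fin d)), (u : EuclideanSpace ℝ (Fin d))⟫ ^ 2) ∂σ) *
          (⟪v, w⟫ - ⟪v, (u : EuclideanSpace ℝ (Fin d))⟫ * ⟪w, (u : EuclideanSpace ℝ (Fin d))⟫) := by
  have hu : ‖(u : EuclideanSpace ℝ (Fin d))‖ = 1 := norm_eq_of_mem_sphere u
  obtain ⟨u, hu'⟩ := u
  dsimp only at hu hint ⊢
  have huu : ⟪u, u⟫ = 1 := by rw [real_inner_self_eq_norm_sq, hu, one_pow]
  have hperp : ∀ z : EuclideanSpace ℝ (Fin d), ⟪z - ⟪z, u⟫ • u, u⟫ = 0 := by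
    intro z
    rw [inner_sub_left, real_inner_smul_left, huu]
    ring
  have hmove : ∀ x z : EuclideanSpace ℝ (Fin d),
      ⟪x - ⟪x, u⟫ • u, z⟫ = ⟪x, z - ⟪z, u⟫ • u⟫ := by
    intro x z
    rw [inner_sub_left, inner_sub_right, real_inner_smul_left, real_inner_smul_right,
      real_inner_comm z u]
    ring
  have hvw : ⟪v - ⟪v, u⟫ • u, w - ⟪w, u⟫ • u⟫ = ⟪v, w⟫ - ⟪v, u⟫ * ⟪w, u⟫ := by
    rw [← hmove, inner_sub_left, hperp, zero_smul, inner_zero_left, inner_sub_left,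
      real_inner_smul_left, real_inner_comm w u]
    ring
  simp only [hmove]
  rw [← hvw]
  have hx := hperp v
  have hy := hperp w
  generalize v - ⟪v, u⟫ • u = x at hx ⊢
  generalize w - ⟪w, u⟫ • u = y at hy ⊢
  have hpol : ∫ ω : sphere (0 : EuclideanSpace ℝ (Fin d)) 1,
      a ⟪(ω : EuclideanSpace ℝ (Fin d)), u⟫ * ⟪(ω : EuclideanSpace ℝ (Fin d)), x⟫ *
        ⟪(ω : EuclideanSpace ℝ (Fin d)), y⟫ ∂σ =
      (zonalQuad σ u a (x + y) - zonalQuad σ u a (x - y)) / 4 := by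
    unfold zonalQuad
    rw [← integral_sub (integrable_mul_continuous hint (by fun_prop))
      (integrable_mul_continuous hint (by fun_prop)), ← integral_div]
    congr 1
    ext ω
    rw [inner_add_right, inner_sub_right]
    ring
  rw [hpol, zonalQuad_eq hd hσ hu hint (by rw [inner_add_left, hx, hy, add_zero]),
    zonalQuad_eq hd hσ hu hint (by rw [inner_sub_left, hx, hy, sub_zero]),
    norm_add_sq_real, norm_sub_sq_real]
  ring
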